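/- Simultaneous self-subsumption is symmetry-preserving: if F' = R(F) for a CNF formula F, then Aut_syn(F)_{{Lit(F')}} = Aut_syn(F) and Aut_syn(F)↓_{Lit(F')} ⊆ Aut_syn(F'). -/

import Mathlib

/-- A literal over a variable type `V`: a variable or its negation. -/
inductive Lit (V : Type) where
  | pos : V → Lit V
  | neg : V → Lit V
deriving DecidableEq

variable {V : Type} [DecidableEq V]

/-- Negation of a literal (so that double negation is the identity). -/
def Lit.negate : Lit V → Lit V
  | .pos v => .neg v
  | .neg v => .pos v

/-- The underlying variable of a literal. -/
def Lit.var : Lit V → V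
  | .pos v => v
  | .neg v => v

/-- A clause is a finite set of literals. -/
abbrev Clause (V : Type) := Finset (Lit V)

/-- A CNF formula is a finite set of clauses. -/
abbrev CNF (V : Type) := Finset (Clause V)

/-- `Var(F)`: the variables occurring in a formula. -/
def CNF.vars (F : CNF V) : Finset V := Finset.sup F (fun C => Finset.image Lit.var C)

/-- `Lit(F) = Var(F) ∪ {v̄ : v ∈ Var(F)}`. -/
def CNF.lits (F : CNF V) : Finset (Lit V) :=
  Finset.image Lit.pos (CNF.vars F) ∪ Finset.image Lit.neg (CNF.vars F)

/-- The value of a literal under a complete assignment (given on the variables,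
which determines a consistent complete assignment on all literals). -/
def Lit.val (σ : V → Bool) : Lit V → Bool
  | .pos v => σ v
  | .neg v => !(σ v)

/-- `C[σ]`: delete from `C` every literal mapped to `⊥` by `σ`
(i.e. keep `l` with `¬l ∉ σ`). -/
def Clause.reduce (σ : V → Bool) (C : Clause V) : Clause V :=
  Finset.filter (fun l => Lit.val σ (Lit.negate l) = false) C

/-- `F[σ]`: delete every clause containing a literal mapped to `⊤` by `σ`
(for a complete assignment: every clause containing no false literal is kept)
and delete from each remaining clause every literal mapped to `⊥`. -/
def CNF.reduce (F : CNF V) (σ : V → Bool) : CNF V :=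
  Finset.image (Clause.reduce σ) (Finset.filter (fun C => ∀ l ∈ C, Lit.val σ l = false) F)

/-- Apply a map on literals elementwise to clauses and formulas. -/
def CNF.map (φ : Lit V → Lit V) (F : CNF V) : CNF V :=
  Finset.image (fun C => Finset.image φ C) F

/-- `φ` is a syntactic symmetry of `F`: a bijection of `Lit(F)` respecting
negation with `φ(F) = F`. -/
def IsSynSym (F : CNF V) (φ : Lit V → Lit V) : Prop :=
  Set.BijOn φ (CNF.lits F : Set (Lit V)) (CNF.lits F : Set (Lit V)) ∧
  (∀ l ∈ CNF.lits F, φ (Lit.negate l) = Lit.negate (φ l)) ∧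
  CNF.map φ F = F

/-- `φ` is a semantic symmetry of `F`: a bijection of `Lit(F)` respecting
negation with `F[σ] = φ(F)[σ]` for every complete assignment `σ`. -/
def IsSemSym (F : CNF V) (φ : Lit V → Lit V) : Prop :=
  Set.BijOn φ (CNF.lits F : Set (Lit V)) (CNF.lits F : Set (Lit V)) ∧
  (∀ l ∈ CNF.lits F, φ (Lit.negate l) = Lit.negate (φ l)) ∧
  ∀ σ : V → Bool, CNF.reduce F σ = CNF.reduce (CNF.map φ F) σ

/-- Extend a map defined on the literal set `S` by the identity outside `S`. -/
def extendId (S : Finset (Lit V)) (φ : Lit V → Lit V) : Lit V → Lit V :=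
  fun l => if l ∈ S then φ l else l

/-- `F[l ↦ ⊤]`: delete every clause containing `l` and delete `l̄` from every
remaining clause. -/
def CNF.assignTrue (F : CNF V) (l : Lit V) : CNF V :=
  Finset.image (fun C => Finset.erase C (Lit.negate l)) (Finset.filter (fun C => l ∉ C) F)

/-- `f_F(C₁, C, x)` holds for some `C₁ ∈ F`: the literal `x` can be removed
from the clause `C` by self-subsuming resolution in `F`. -/
def Removable (F : CNF V) (C : Clause V) (x : Lit V) : Prop :=
  x ∈ C ∧ ∃ C₁ ∈ F, Lit.negate x ∈ C₁ ∧ C₁.erase (Lit.negate x) ⊂ C.erase x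

open Classical in
/-- `r_F(C)`: if there is exactly one literal removable from `C` by
self-subsuming resolution in `F`, remove it; otherwise leave `C` unchanged. -/
noncomputable def rFun (F : CNF V) (C : Clause V) : Clause V :=
  if h : ∃! x : Lit V, Removable F C x then C.erase h.choose else C

/-- Simultaneous self-subsumption: `R(F) = {r_F(C) : C ∈ F}`. -/
noncomputable def RFun (F : CNF V) : CNF V := Finset.image (rFun F) F

theorem negate_negate' (l : Lit V) : l.negate.negate = l := by cases l <;> rfl

theorem mem_lits' (F : CNF V) (l : Lit V) :
    l ∈ CNF.lits F ↔ ∃ C ∈ F, l ∈ C ∨ l.negate ∈ C := by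
  have hv : ∀ v, v ∈ CNF.vars F ↔ ∃ C ∈ F, Lit.pos v ∈ C ∨ Lit.neg v ∈ C := by
    intro v
    simp only [CNF.vars, Finset.mem_sup, Finset.mem_image]
    refine exists_congr fun C => and_congr_right fun _ => ?_
    constructor
    · rintro ⟨a, ha, rfl⟩
      cases a
      · exact Or.inl ha
      · exact Or.inr ha
    · rintro (h | h)
      · exact ⟨_, h, rfl⟩
      · exact ⟨_, h, rfl⟩
  cases l with
  | pos v => simp [CNF.lits, hv, Lit.negate]
  | neg v => simp [CNF.lits, hv, Lit.negate, or_comm]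

theorem negate_mem_lits' {F : CNF V} {l : Lit V} (h : l ∈ CNF.lits F) :
    l.negate ∈ CNF.lits F := by
  rw [mem_lits'] at h ⊢
  obtain ⟨C, hC, h⟩ := h
  exact ⟨C, hC, by rw [negate_negate']; exact h.symm⟩

theorem sub_lits' {F : CNF V} {C : Clause V} (hC : C ∈ F) {l : Lit V} (h : l ∈ C) :
    l ∈ CNF.lits F := (mem_lits' F l).2 ⟨C, hC, Or.inl h⟩

theorem mem_image_iff' {F : CNF V} {φ : Lit V → Lit V}
    (hi : Set.InjOn φ (CNF.lits F : Set (Lit V))) {C : Clause V}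
    (hC : ∀ l ∈ C, l ∈ CNF.lits F) {x : Lit V} (hx : x ∈ CNF.lits F) :
    φ x ∈ C.image φ ↔ x ∈ C := by
  constructor
  · intro h
    obtain ⟨y, hy, e⟩ := Finset.mem_image.1 h
    have := hi (hC y hy) hx e
    rwa [← this]
  · exact Finset.mem_image_of_mem φ

theorem image_erase' {F : CNF V} {φ : Lit V → Lit V}
    (hi : Set.InjOn φ (CNF.lits F : Set (Lit V))) {C : Clause V}
    (hC : ∀ l ∈ C, l ∈ CNF.lits F) {x : Lit V} (hx : x ∈ CNF.lits F) :
    (C.image φ).erase (φ x) = (C.erase x).image φ := by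
  ext y
  simp only [Finset.mem_erase, Finset.mem_image]
  constructor
  · rintro ⟨h, z, hz, rfl⟩
    exact ⟨z, ⟨fun e => h (by rw [e]), hz⟩, rfl⟩
  · rintro ⟨z, ⟨h, hz⟩, rfl⟩
    exact ⟨fun e => h (hi (hC z hz) hx e), z, hz, rfl⟩

theorem image_subset' {F : CNF V} {φ : Lit V → Lit V}
    (hi : Set.InjOn φ (CNF.lits F : Set (Lit V))) {C D : Clause V}
    (hC : ∀ l ∈ C, l ∈ CNF.lits F) (hD : ∀ l ∈ D, l ∈ CNF.lits F) :
    C.image φ ⊆ D.image φ ↔ C ⊆ D := by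
  constructor
  · intro h x hx
    exact (mem_image_iff' hi hD (hC x hx)).1 (h (Finset.mem_image_of_mem φ hx))
  · exact Finset.image_subset_image

theorem removable_iff' {F : CNF V} {φ : Lit V → Lit V} (h : IsSynSym F φ)
    {C : Clause V} (hC : C ∈ F) {x : Lit V} (hx : x ∈ CNF.lits F) :
    Removable F (C.image φ) (φ x) ↔ Removable F C x := by
  obtain ⟨hb, hn, hm⟩ := h
  have hi := hb.injOn
  have hCl : ∀ l ∈ C, l ∈ CNF.lits F := fun l hl => sub_lits' hC hl
  have hnx := negate_mem_lits' hx
  have key : ∀ D ∈ F, (Lit.negate (φ x) ∈ D.image φ ∧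
      (D.image φ).erase (Lit.negate (φ x)) ⊂ (C.image φ).erase (φ x)) ↔
      (Lit.negate x ∈ D ∧ D.erase (Lit.negate x) ⊂ C.erase x) := by
    intro D hD
    have hDl : ∀ l ∈ D, l ∈ CNF.lits F := fun l hl => sub_lits' hD hl
    have h1 : ∀ l ∈ D.erase (Lit.negate x), l ∈ CNF.lits F :=
      fun l hl => hDl l (Finset.mem_of_mem_erase hl)
    have h2 : ∀ l ∈ C.erase x, l ∈ CNF.lits F :=
      fun l hl => hCl l (Finset.mem_of_mem_erase hl)
    rw [← hn x hx, mem_image_iff' hi hDl hnx, image_erase' hi hDl hnx, image_erase' hi hCl hx,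
      ssubset_iff_subset_not_subset, ssubset_iff_subset_not_subset]
    rw [image_subset' hi h1 h2, image_subset' hi h2 h1]
  unfold Removable
  rw [mem_image_iff' hi hCl hx]
  refine and_congr_right fun _ => ?_
  constructor
  · rintro ⟨C₁, h1, h2⟩
    rw [← hm] at h1
    obtain ⟨D, hD, rfl⟩ := Finset.mem_image.1 h1
    exact ⟨D, hD, (key D hD).1 h2⟩
  · rintro ⟨D, hD, h2⟩
    refine ⟨D.image φ, ?_, (key D hD).2 h2⟩
    rw [← hm]
    exact Finset.mem_image_of_mem _ hD

theorem rFun_pos' {F : CNF V} {C : Clause V} {x : Lit V} (hx : Removable F C x)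
    (hu : ∀ y, Removable F C y → y = x) : rFun F C = C.erase x := by
  have h : ∃! x : Lit V, Removable F C x := ⟨x, hx, hu⟩
  unfold rFun
  rw [dif_pos h, hu _ h.choose_spec.1]

theorem rFun_image' {F : CNF V} {φ : Lit V → Lit V} (h : IsSynSym F φ)
    {C : Clause V} (hC : C ∈ F) : rFun F (C.image φ) = (rFun F C).image φ := by
  have hi := h.1.injOn
  have hCl : ∀ l ∈ C, l ∈ CNF.lits F := fun l hl => sub_lits' hC hl
  by_cases hu : ∃! x : Lit V, Removable F C x
  · obtain ⟨x, hx, hu⟩ := hu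
    have hxl := hCl x hx.1
    rw [rFun_pos' hx hu, ← image_erase' hi hCl hxl]
    refine rFun_pos' ((removable_iff' h hC hxl).2 hx) ?_
    intro y hy
    obtain ⟨z, hz, rfl⟩ := Finset.mem_image.1 hy.1
    rw [hu z ((removable_iff' h hC (hCl z hz)).1 hy)]
  · have hu' : ¬ ∃! x : Lit V, Removable F (C.image φ) x := by
      rintro ⟨y, hy, hyu⟩
      obtain ⟨z, hz, rfl⟩ := Finset.mem_image.1 hy.1
      refine hu ⟨z, (removable_iff' h hC (hCl z hz)).1 hy, fun w hw => ?_⟩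
      have hwl := hCl w hw.1
      exact hi hwl (hCl z hz) (hyu _ ((removable_iff' h hC hwl).2 hw))
    unfold rFun
    rw [dif_neg hu, dif_neg hu']

theorem map_RFun' {F : CNF V} {φ : Lit V → Lit V} (h : IsSynSym F φ) :
    CNF.map φ (RFun F) = RFun F := by
  have hm := h.2.2
  have h1 : CNF.map φ (RFun F) = Finset.image (rFun F) (CNF.map φ F) := by
    unfold CNF.map RFun
    rw [Finset.image_image, Finset.image_image]
    exact Finset.image_congr fun C hC => (rFun_image' h hC).symm
  rw [h1, hm]
  rfl

theorem rFun_subset' (F : CNF V) (C : Clause V) : rFun F C ⊆ C := by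
  unfold rFun
  split_ifs
  · exact Finset.erase_subset _ _
  · exact subset_rfl

theorem lits_RFun' {F : CNF V} {l : Lit V} (h : l ∈ CNF.lits (RFun F)) : l ∈ CNF.lits F := by
  rw [mem_lits'] at h ⊢
  obtain ⟨C, hC, h⟩ := h
  obtain ⟨D, hD, rfl⟩ := Finset.mem_image.1 hC
  exact ⟨D, hD, h.imp (fun h => rFun_subset' F D h) (fun h => rFun_subset' F D h)⟩

theorem image_lits' {F : CNF V} {φ : Lit V → Lit V} (h : IsSynSym F φ) :
    φ '' (CNF.lits (RFun F) : Set (Lit V)) = (CNF.lits (RFun F) : Set (Lit V)) := by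
  have hm := map_RFun' h
  have hn := h.2.1
  apply Set.Subset.antisymm
  · rintro _ ⟨l, hl, rfl⟩
    have hlF := lits_RFun' hl
    obtain ⟨C, hC, hl⟩ := (mem_lits' _ _).1 hl
    refine (mem_lits' _ _).2 ⟨C.image φ, ?_, ?_⟩
    · rw [← hm]
      exact Finset.mem_image_of_mem _ hC
    · rw [← hn l hlF]
      exact hl.imp (Finset.mem_image_of_mem φ) (Finset.mem_image_of_mem φ)
  · intro l hl
    obtain ⟨C, hC, hl⟩ := (mem_lits' _ _).1 hl
    rw [← hm] at hC
    obtain ⟨D, hD, rfl⟩ := Finset.mem_image.1 hC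
    rcases hl with hl | hl
    · obtain ⟨z, hz, rfl⟩ := Finset.mem_image.1 hl
      exact ⟨z, sub_lits' hD hz, rfl⟩
    · obtain ⟨z, hz, e⟩ := Finset.mem_image.1 hl
      have hzl := sub_lits' hD hz
      refine ⟨z.negate, negate_mem_lits' hzl, ?_⟩
      rw [hn z (lits_RFun' hzl), e, negate_negate']

/-- Simultaneous self-subsumption is symmetry-preserving: for
`F' = R(F)`, every syntactic symmetry of `F` setwise stabilizes `Lit(F')`
(so `Aut_syn(F)_{{Lit(F')}} = Aut_syn(F)`) and its restriction to `Lit(F')`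
is a syntactic symmetry of `F'` (so `Aut_syn(F)↓_{Lit(F')} ⊆ Aut_syn(F')`). -/
theorem simultaneous_self_subsumption_symmetry_preserving (F : CNF V) :
    (∀ φ : Lit V → Lit V, IsSynSym F φ →
        φ '' (CNF.lits (RFun F) : Set (Lit V)) = (CNF.lits (RFun F) : Set (Lit V))) ∧
    (∀ φ : Lit V → Lit V, IsSynSym F φ →
        φ '' (CNF.lits (RFun F) : Set (Lit V)) = (CNF.lits (RFun F) : Set (Lit V)) →
        IsSynSym (RFun F) φ) := by
  refine ⟨fun φ h => image_lits' h, fun φ h he => ⟨?_, ?_, map_RFun' h⟩⟩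
  · have hi : Set.InjOn φ (CNF.lits (RFun F) : Set (Lit V)) :=
      h.1.injOn.mono fun l hl => lits_RFun' hl
    have hb := hi.bijOn_image
    rwa [he] at hb
  · exact fun l hl => h.2.1 l (lits_RFun' hl)
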